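/- arXiv:2101.09736 — 2 statements merged into one kernel-verified Lean document; each statement's English description precedes it below -/
import Mathlib

section
/- Let G be a simple graph on a vertex set V and let M ⊆ V be an independent set of G (no two vertices of M are adjacent) such that the subgraph of G induced on the complement V \ M is triangle-free (contains no 3-clique). If {a, b, c} and {a, b, d} are two 3-cliques (triangles) of G sharing the edge {a, b}, with c ≠ d, then c and d are not adjacent in G. -/
/-! An edge `cd` would complete the two triangles to a 4-clique. A 4-clique has at most one vertex
in the independent set `M`, so at least three of its vertices would form a triangle outside `M`. -/

section

open SimpleGraph

variable {V : Type*} {G : SimpleGraph V} {s t M : Set V} {m n : ℕ}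

theorem card_lt_of_cliqueFreeOn {K : Finset V} (hs : G.CliqueFreeOn s n) (hK : G.IsClique K)
    (hKs : (K : Set V) ⊆ s) : K.card < n := by
  by_contra! hn
  exact CliqueFreeOn.mono G hn hs hKs ⟨hK, rfl⟩

theorem cliqueFreeOn_union (hs : G.CliqueFreeOn s m) (ht : G.CliqueFreeOn t (n + 1)) :
    G.CliqueFreeOn (s ∪ t) (m + n) := by
  classical
  intro K hK hclique
  have card_in_s : (K.filter (· ∈ s)).card < m :=
    card_lt_of_cliqueFreeOn hs (hclique.isClique.subset (K.filter_subset _))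
      fun v hv ↦ (Finset.mem_filter.1 hv).2
  have card_outside_s : (K.filter (· ∉ s)).card < n + 1 :=
    card_lt_of_cliqueFreeOn ht (hclique.isClique.subset (K.filter_subset _)) fun v hv ↦
      have ⟨hvK, hvs⟩ := Finset.mem_filter.1 hv
      (hK hvK).resolve_left hvs
  have card_split := K.card_filter_add_card_filter_not (· ∈ s)
  have card_eq := hclique.card_eq
  lia

theorem cliqueFree_succ_of_isIndepSet (hM : G.IsIndepSet M) (hn : (G.induce Mᶜ).CliqueFree n) :
    G.CliqueFree (n + 1) := by
  rw [← cliqueFreeOn_univ, ← Set.compl_union_self M]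
  exact cliqueFreeOn_union ((cliqueFree_induce_iff G Mᶜ n).1 hn) ((cliqueFreeOn_two G).2 hM)

end

/-- Lemma 1 in its "adjacent triangles" form: if `M` is an independent set of a simple
graph `G`, the subgraph induced on the complement of `M` is triangle-free, and
`{a,b,c}` and `{a,b,d}` are two triangles of `G` sharing the edge `{a,b}` with `c ≠ d`,
then `c` and `d` are not adjacent in `G`. -/
theorem not_adj_of_adjacent_triangles
    {V : Type*} [DecidableEq V] (G : SimpleGraph V) (M : Set V)
    (hM : ∀ u ∈ M, ∀ v ∈ M, ¬ G.Adj u v)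
    (hTF : (G.induce (Mᶜ : Set V)).CliqueFree 3)
    (a b c d : V) (hcd : c ≠ d)
    (h₁ : G.IsNClique 3 {a, b, c})
    (h₂ : G.IsNClique 3 {a, b, d}) :
    ¬ G.Adj c d := by
  intro hcd_adj
  obtain ⟨-, had, hbd⟩ := SimpleGraph.is3Clique_triple_iff.1 h₂
  have four_clique : G.IsNClique 4 {d, a, b, c} :=
    h₁.insert (by simp [had.symm, hbd.symm, hcd_adj.symm])
  have indep : G.IsIndepSet M := fun u hu v hv _ ↦ hM u hu v hv
  exact cliqueFree_succ_of_isIndepSet indep hTF _ four_clique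
end

section
/- Let A and B be finite subsets of ℝ². Assume every point of A has second coordinate equal to 0 and first coordinate at most 1 (A lies on the x-axis), and every point of B has nonzero second coordinate and first coordinate at most 1. Then there exists ε > 0 and L ∈ ℝ such that for every l ≥ L the following holds: setting o = (l, 0), r = (2, ε), s = (2, −ε), and W = { o + α·(r − o) + β·(s − o) : α ≥ 0, β ≥ 0 } (the wedge with apex o spanned by the rays from o through r and through s), every point a ∈ A can be written as o + α·(r − o) + β·(s − o) with α > 0 and β > 0 (so A lies in the interior of the wedge W), and no point of B belongs to W. -/
/-!
In the coordinates `p = o + α • (r - o) + β • (s - o)`, `α + β = (l - p.1) / (l - c)` and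
`α - β = p.2 / ε` for the apex `o = (l, 0)` and `r, s = (c, ±ε)`, so the wedge is the cone
`|p.2| ≤ ε * ((l - p.1) / (l - c))`. Its interior contains every point of the axis to the left of
the apex. When `l ≥ c + 1`, the height `ε * ((l - p.1) / (l - c))` is at most
`ε * max 1 (c + 1 - p.1)`, which does not involve `l`; hence one sufficiently small `ε` keeps
finitely many points off the axis outside the wedge for all such `l`.
-/

section Wedge

variable (K : Type*) {E : Type*} [Semiring K] [Preorder K] [AddCommGroup E] [Module K E]

/-- The wedge with apex `o` through `r` and `s`: the translate by `o` of the convex cone generated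
by `r - o` and `s - o`. -/
def wedge (o r s : E) : Set E :=
  {p | ∃ α ≥ (0 : K), ∃ β ≥ (0 : K), p = o + α • (r - o) + β • (s - o)}

/-- The open wedge with apex `o` through `r` and `s`, encoded by positive coefficients so that no
topology is needed; in a real plane it is the interior of `wedge K o r s` when `r - o` and `s - o`
are linearly independent. -/
def openWedge (o r s : E) : Set E :=
  {p | ∃ α > (0 : K), ∃ β > (0 : K), p = o + α • (r - o) + β • (s - o)}

end Wedge

theorem eq_wedge_combination_iff {K : Type*} [Field K] [NeZero (2 : K)] {c l ε : K}
    (hcl : l - c ≠ 0) (hε : ε ≠ 0) {p : K × K} {α β : K} :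
    p = (l, 0) + α • ((c, ε) - (l, 0)) + β • ((c, -ε) - (l, 0)) ↔
      α = ((l - p.1) / (l - c) + p.2 / ε) / 2 ∧ β = ((l - p.1) / (l - c) - p.2 / ε) / 2 := by
  obtain ⟨x, y⟩ := p
  simp only [Prod.ext_iff, Prod.fst_add, Prod.snd_add, Prod.smul_fst, Prod.smul_snd, Prod.fst_sub,
    Prod.snd_sub, smul_eq_mul, sub_zero, zero_add]
  constructor
  · rintro ⟨rfl, rfl⟩
    constructor <;> field_simp <;> ring
  · rintro ⟨rfl, rfl⟩
    constructor <;> field_simp <;> ring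

section LinearOrderedField

variable {K : Type*} [Field K] [LinearOrder K] [IsStrictOrderedRing K]

theorem mem_wedge_iff {c l ε : K} (hcl : c < l) (hε : 0 < ε) {p : K × K} :
    p ∈ wedge K (l, 0) (c, ε) (c, -ε) ↔ |p.2| / ε ≤ (l - p.1) / (l - c) := by
  have habs : |p.2| / ε = |p.2 / ε| := by rw [abs_div, abs_of_pos hε]
  simp only [wedge, Set.mem_ofPred_eq, eq_wedge_combination_iff (sub_pos.2 hcl).ne' hε.ne',
    existsAndEq, and_true, ge_iff_le, habs, abs_le]
  constructor <;> rintro ⟨hα, hβ⟩ <;> constructor <;> linarith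

theorem mem_openWedge_iff {c l ε : K} (hcl : c < l) (hε : 0 < ε) {p : K × K} :
    p ∈ openWedge K (l, 0) (c, ε) (c, -ε) ↔ |p.2| / ε < (l - p.1) / (l - c) := by
  have habs : |p.2| / ε = |p.2 / ε| := by rw [abs_div, abs_of_pos hε]
  simp only [openWedge, Set.mem_ofPred_eq, eq_wedge_combination_iff (sub_pos.2 hcl).ne' hε.ne',
    existsAndEq, and_true, gt_iff_lt, habs, abs_lt]
  constructor <;> rintro ⟨hα, hβ⟩ <;> constructor <;> linarith

theorem sub_div_sub_le_max {c l : K} (hl : c + 1 ≤ l) (x : K) :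
    (l - x) / (l - c) ≤ max 1 (c + 1 - x) := by
  have hlc : 1 ≤ l - c := by linarith
  rw [div_le_iff₀ (by linarith)]
  rcases le_total c x with hcx | hxc
  · calc l - x ≤ 1 * (l - c) := by linarith
      _ ≤ max 1 (c + 1 - x) * (l - c) := by gcongr; exact le_max_left _ _
  · calc l - x = (l - c) + (c - x) * 1 := by ring
      _ ≤ (l - c) + (c - x) * (l - c) := by gcongr
      _ = (c + 1 - x) * (l - c) := by ring
      _ ≤ max 1 (c + 1 - x) * (l - c) := by gcongr; exact le_max_right _ _

theorem notMem_wedge_of_mul_max_lt {c l ε : K} (hl : c + 1 ≤ l) (hε : 0 < ε) {p : K × K}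
    (hp : ε * max 1 (c + 1 - p.1) < |p.2|) : p ∉ wedge K (l, 0) (c, ε) (c, -ε) := by
  rw [mem_wedge_iff (by linarith) hε, not_le]
  exact (sub_div_sub_le_max hl p.1).trans_lt ((lt_div_iff₀' hε).2 hp)

theorem mem_openWedge_of_snd_eq_zero {c l ε : K} (hcl : c < l) (hε : 0 < ε) {p : K × K}
    (hp : p.2 = 0) (hpl : p.1 < l) : p ∈ openWedge K (l, 0) (c, ε) (c, -ε) := by
  rw [mem_openWedge_iff hcl hε, hp, abs_zero, zero_div]
  exact div_pos (sub_pos.2 hpl) (sub_pos.2 hcl)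

theorem exists_pos_forall_mul_lt_of_finite {ι : Type*} {s : Set ι} (hs : s.Finite) (f : ι → K)
    {g : ι → K} (hg : ∀ i ∈ s, 0 < g i) : ∃ ε > 0, ∀ i ∈ s, ε * f i < g i := by
  have hf (i : ι) : 0 < max 1 (f i) := lt_max_of_lt_left one_pos
  have hgf : ∀ x ∈ ({0} : Set K), ∀ y ∈ (fun i ↦ g i / max 1 (f i)) '' s, x < y := by
    rintro _ rfl _ ⟨i, hi, rfl⟩
    exact div_pos (hg i hi) (hf i)
  obtain ⟨ε, h0ε, hεs⟩ := (Set.finite_singleton 0).exists_between' (hs.image _) hgf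
  have hε : 0 < ε := h0ε 0 rfl
  refine ⟨ε, hε, fun i hi ↦ ?_⟩
  calc ε * f i ≤ ε * max 1 (f i) := by gcongr; exact le_max_right _ _
    _ < g i := (lt_div_iff₀ (hf i)).1 (hεs _ (Set.mem_image_of_mem _ hi))

theorem wedge_separation_general (c : K) {A B : Set (K × K)}
    (hA : ∀ p ∈ A, p.2 = 0) (hA_bdd : BddAbove (Prod.fst '' A))
    (hB : ∀ p ∈ B, p.2 ≠ 0) (hB_fin : B.Finite) :
    ∃ ε > (0 : K), ∃ L : K, ∀ l ≥ L,
      (∀ a ∈ A, a ∈ openWedge K (l, 0) (c, ε) (c, -ε)) ∧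
      (∀ b ∈ B, b ∉ wedge K (l, 0) (c, ε) (c, -ε)) := by
  obtain ⟨M, hM⟩ := hA_bdd
  obtain ⟨ε, hε, hεB⟩ := exists_pos_forall_mul_lt_of_finite hB_fin
    (fun p ↦ max 1 (c + 1 - p.1)) fun p hp ↦ abs_pos.2 (hB p hp)
  refine ⟨ε, hε, max c M + 1, fun l hl ↦ ⟨fun a ha ↦ ?_, fun b hb ↦ ?_⟩⟩
  · have haM : a.1 ≤ M := hM (Set.mem_image_of_mem _ ha)
    exact mem_openWedge_of_snd_eq_zero (by linarith [le_max_left c M]) hε (hA a ha)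
      (by linarith [le_max_right c M])
  · exact notMem_wedge_of_mul_max_lt (by linarith [le_max_left c M]) hε (hεB b hb)

end LinearOrderedField

/-- Separation property used in Theorem 4: if all points of `A` lie on the x-axis with
first coordinate at most `1`, and all points of `B` have nonzero second coordinate and
first coordinate at most `1`, then there are `ε > 0` and `L` such that for every
`l ≥ L`, the wedge with apex `o = (l, 0)` spanned by the rays from `o` through
`r = (2, ε)` and `s = (2, -ε)` contains every point of `A` in its interior and
contains no point of `B`. -/
theorem wedge_separation
    (A B : Finset (ℝ × ℝ))
    (hA : ∀ p ∈ A, p.2 = 0 ∧ p.1 ≤ 1)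
    (hB : ∀ p ∈ B, p.2 ≠ 0 ∧ p.1 ≤ 1) :
    ∃ ε > (0 : ℝ), ∃ L : ℝ, ∀ l ≥ L,
      (∀ a ∈ A, ∃ α > (0 : ℝ), ∃ β > (0 : ℝ),
        a = ((l, 0) : ℝ × ℝ) + α • (((2, ε) : ℝ × ℝ) - (l, 0))
              + β • (((2, -ε) : ℝ × ℝ) - (l, 0))) ∧
      (∀ b ∈ B, ¬ ∃ α ≥ (0 : ℝ), ∃ β ≥ (0 : ℝ),
        b = ((l, 0) : ℝ × ℝ) + α • (((2, ε) : ℝ × ℝ) - (l, 0))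
              + β • (((2, -ε) : ℝ × ℝ) - (l, 0))) := by
  exact wedge_separation_general 2 (fun p hp ↦ (hA p hp).1) (A.finite_toSet.image _).bddAbove
    (fun p hp ↦ (hB p hp).1) B.finite_toSet
end
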